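/- Let $\Gamma_1, \Gamma_2$ be nontrivial groups with finite symmetric generating sets, let $\Gamma = \Gamma_1 * \Gamma_2$ with the union generating set and word metric, and let $v$ be the exponential growth rate of $\Gamma$. Define a measure $\mu$ on $\Gamma$ by $\mu(g_1 g_2) = e^{-v|g_1 g_2|}$ for $g_1 \in \Gamma_1 \setminus \{e\}$, $g_2 \in \Gamma_2 \setminus \{e\}$ (and $0$ elsewhere). Then $\mu$ is a probability measure, and its $n$-fold convolution satisfies $\mu^{*n}(g_1^1 g_2^1 \cdots g_1^n g_2^n) = e^{-v \sum_i |g_1^i g_2^i|}$ for all $g_1^i \in \Gamma_1\setminus\{e\}$, $g_2^i \in \Gamma_2\setminus\{e\}$; consequently $-\log \mu^{*n}(X_n) = v|X_n|$ almost surely for the associated random walk, and $h(\mu) = \ell(\mu) v$. -/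

import Mathlib

open Filter

/-- The word length of `g` with respect to a set `S` of generators. -/
noncomputable def wordLength {G : Type*} [Group G] (S : Set G) (g : G) : ℕ :=
  sInf {n | ∃ l : List G, (∀ x ∈ l, x ∈ S) ∧ l.length = n ∧ l.prod = g}

/-- Convolution of two measures on a group. -/
noncomputable def conv {G : Type*} [Group G] (μ₁ μ₂ : G → ℝ) : G → ℝ :=
  fun g => ∑' h, μ₁ h * μ₂ (h⁻¹ * g)

/-- `n`-fold convolution power `μ^{*n}` (with `μ^{*0} = δ_e`). -/
noncomputable def convPow {G : Type*} [Group G] (μ : G → ℝ) : ℕ → G → ℝ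
  | 0 => Set.indicator {(1 : G)} (fun _ => (1 : ℝ))
  | n + 1 => conv μ (convPow μ n)

/-- Shannon entropy of a measure on a countable set. -/
noncomputable def entropy {G : Type*} (μ : G → ℝ) : ℝ :=
  ∑' g, μ g * (-Real.log (μ g))

/-- The union generating set of a free product `G₁ ∗ G₂`. -/
def unionGens {G₁ G₂ : Type*} [Group G₁] [Group G₂] (S₁ : Finset G₁) (S₂ : Finset G₂) :
    Set (Monoid.Coprod G₁ G₂) :=
  (⇑(Monoid.Coprod.inl : G₁ →* Monoid.Coprod G₁ G₂) '' (S₁ : Set G₁)) ∪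
    (⇑(Monoid.Coprod.inr : G₂ →* Monoid.Coprod G₁ G₂) '' (S₂ : Set G₂))

namespace FP
open Monoid.Coprod

section words
set_option linter.unusedSectionVars false
variable {G₁ G₂ : Type*} [Group G₁] [Group G₂]

def SL : List (G₁ ⊕ G₂) → Prop
  | Sum.inl _ :: _ => True
  | _ => False

def SR : List (G₁ ⊕ G₂) → Prop
  | Sum.inr _ :: _ => True
  | _ => False

/-- Reduced words. -/
def Red : List (G₁ ⊕ G₂) → Prop
  | [] => True
  | Sum.inl a :: w => a ≠ 1 ∧ ¬ SL w ∧ Red w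
  | Sum.inr b :: w => b ≠ 1 ∧ ¬ SR w ∧ Red w

open Classical in
noncomputable def actL (a : G₁) : List (G₁ ⊕ G₂) → List (G₁ ⊕ G₂)
  | Sum.inl x :: w => if a * x = 1 then w else Sum.inl (a * x) :: w
  | [] => if a = 1 then [] else [Sum.inl a]
  | Sum.inr y :: w => if a = 1 then Sum.inr y :: w else Sum.inl a :: Sum.inr y :: w

open Classical in
noncomputable def actR (b : G₂) : List (G₁ ⊕ G₂) → List (G₁ ⊕ G₂)
  | Sum.inr x :: w => if b * x = 1 then w else Sum.inr (b * x) :: w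
  | [] => if b = 1 then [] else [Sum.inr b]
  | Sum.inl y :: w => if b = 1 then Sum.inl y :: w else Sum.inr b :: Sum.inl y :: w

lemma red_actL (a : G₁) (w : List (G₁ ⊕ G₂)) (hw : Red w) : Red (actL a w) := by
  rcases w with _ | ⟨x | y, w⟩
  · by_cases h : a = 1 <;> simp [actL, h, Red, SL]
  · by_cases h : a * x = 1
    · simpa [actL, h] using hw.2.2
    · simpa [actL, h, Red] using hw.2
  · by_cases h : a = 1
    · simpa [actL, h] using hw
    · simpa [actL, h, Red, SL] using hw

lemma red_actR (a : G₂) (w : List (G₁ ⊕ G₂)) (hw : Red w) : Red (actR a w) := by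
  rcases w with _ | ⟨y | x, w⟩
  · by_cases h : a = 1 <;> simp [actR, h, Red, SR]
  · by_cases h : a = 1
    · simpa [actR, h] using hw
    · simpa [actR, h, Red, SR] using hw
  · by_cases h : a * x = 1
    · simpa [actR, h] using hw.2.2
    · simpa [actR, h, Red] using hw.2

lemma actL_one (w : List (G₁ ⊕ G₂)) (hw : Red w) : actL 1 w = w := by
  rcases w with _ | ⟨x | y, w⟩
  · simp [actL]
  · simp [actL, hw.1]
  · simp [actL]

lemma actR_one (w : List (G₁ ⊕ G₂)) (hw : Red w) : actR 1 w = w := by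
  rcases w with _ | ⟨x | y, w⟩
  · simp [actR]
  · simp [actR]
  · simp [actR, hw.1]

lemma actL_not (a : G₁) (w : List (G₁ ⊕ G₂)) (h : ¬ SL w) (ha : a ≠ 1) :
    actL a w = Sum.inl a :: w := by
  rcases w with _ | ⟨x | y, w⟩
  · simp [actL, ha]
  · simp [SL] at h
  · simp [actL, ha]

lemma actR_not (a : G₂) (w : List (G₁ ⊕ G₂)) (h : ¬ SR w) (ha : a ≠ 1) :
    actR a w = Sum.inr a :: w := by
  rcases w with _ | ⟨x | y, w⟩
  · simp [actR, ha]
  · simp [actR, ha]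
  · simp [SR] at h

lemma actL_mul (a a' : G₁) (w : List (G₁ ⊕ G₂)) (hw : Red w) :
    actL (a * a') w = actL a (actL a' w) := by
  have key : ∀ w : List (G₁ ⊕ G₂), Red w → ¬ SL w → actL (a * a') w = actL a (actL a' w) := by
    intro w hw h
    by_cases ha' : a' = 1
    · subst ha'; rw [mul_one, actL_one _ hw]
    · rw [actL_not a' w h ha']
      by_cases haa : a * a' = 1
      · rw [haa, actL_one _ hw]; simp [actL, haa]
      · rw [actL_not _ w h haa]; simp [actL, haa]
  rcases w with _ | ⟨x | y, w⟩
  · exact key _ hw (by simp [SL])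
  · by_cases h : a' * x = 1
    · have h1 : actL a' (Sum.inl x :: w) = w := by simp [actL, h]
      rw [h1]
      by_cases h2 : a = 1
      · subst h2; rw [one_mul, h1, actL_one _ hw.2.2]
      · rw [actL_not a w hw.2.1 h2]; simp [actL, mul_assoc, h, h2]
    · by_cases h3 : a * (a' * x) = 1 <;> simp only [actL, h, h3, mul_assoc, if_true, if_false]
  · exact key _ hw (by simp [SL])

lemma actR_mul (a a' : G₂) (w : List (G₁ ⊕ G₂)) (hw : Red w) :
    actR (a * a') w = actR a (actR a' w) := by
  have key : ∀ w : List (G₁ ⊕ G₂), Red w → ¬ SR w → actR (a * a') w = actR a (actR a' w) := by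
    intro w hw h
    by_cases ha' : a' = 1
    · subst ha'; rw [mul_one, actR_one _ hw]
    · rw [actR_not a' w h ha']
      by_cases haa : a * a' = 1
      · rw [haa, actR_one _ hw]; simp [actR, haa]
      · rw [actR_not _ w h haa]; simp [actR, haa]
  rcases w with _ | ⟨y | x, w⟩
  · exact key _ hw (by simp [SR])
  · exact key _ hw (by simp [SR])
  · by_cases h : a' * x = 1
    · have h1 : actR a' (Sum.inr x :: w) = w := by simp [actR, h]
      rw [h1]
      by_cases h2 : a = 1
      · subst h2; rw [one_mul, h1, actR_one _ hw.2.2]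
      · rw [actR_not a w hw.2.1 h2]; simp [actR, mul_assoc, h, h2]
    · by_cases h3 : a * (a' * x) = 1 <;> simp only [actR, h, h3, mul_assoc, if_true, if_false]

variable (G₁ G₂) in
abbrev RW := {w : List (G₁ ⊕ G₂) // Red w}

noncomputable def homL : G₁ →* Function.End (RW G₁ G₂) where
  toFun a := fun w => ⟨actL a w.1, red_actL a w.1 w.2⟩
  map_one' := by
    funext w; exact Subtype.ext (actL_one w.1 w.2)
  map_mul' a a' := by
    funext w; exact Subtype.ext (actL_mul a a' w.1 w.2)

noncomputable def homR : G₂ →* Function.End (RW G₁ G₂) where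
  toFun a := fun w => ⟨actR a w.1, red_actR a w.1 w.2⟩
  map_one' := by
    funext w; exact Subtype.ext (actR_one w.1 w.2)
  map_mul' a a' := by
    funext w; exact Subtype.ext (actR_mul a a' w.1 w.2)

noncomputable def nf (g : Monoid.Coprod G₁ G₂) : List (G₁ ⊕ G₂) :=
  ((lift homL homR g : Function.End (RW G₁ G₂)) ⟨[], trivial⟩).1

lemma nf_red (g : Monoid.Coprod G₁ G₂) : Red (nf g) :=
  ((lift homL homR g : Function.End (RW G₁ G₂)) ⟨[], trivial⟩).2

lemma nf_one : nf (1 : Monoid.Coprod G₁ G₂) = [] := by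
  simp only [nf, map_one]; rfl

lemma nf_inl (a : G₁) (g : Monoid.Coprod G₁ G₂) : nf (inl a * g) = actL a (nf g) := by
  simp only [nf, map_mul, lift_apply_inl]; rfl

lemma nf_inr (a : G₂) (g : Monoid.Coprod G₁ G₂) : nf (inr a * g) = actR a (nf g) := by
  simp only [nf, map_mul, lift_apply_inr]; rfl

def ev : List (G₁ ⊕ G₂) → Monoid.Coprod G₁ G₂
  | [] => 1
  | Sum.inl a :: w => inl a * ev w
  | Sum.inr b :: w => inr b * ev w

lemma nf_ev : ∀ w : List (G₁ ⊕ G₂), Red w → nf (ev w) = w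
  | [], _ => nf_one
  | Sum.inl a :: w, h => by
    rw [ev, nf_inl, nf_ev w h.2.2, actL_not _ _ h.2.1 h.1]
  | Sum.inr a :: w, h => by
    rw [ev, nf_inr, nf_ev w h.2.2, actR_not _ _ h.2.1 h.1]

lemma ev_actL (a : G₁) (w : List (G₁ ⊕ G₂)) : ev (actL a w) = inl a * ev w := by
  rcases w with _ | ⟨x | y, w⟩
  · by_cases h : a = 1 <;> simp [actL, h, ev]
  · by_cases h : a * x = 1
    · simp [actL, h, ev, ← mul_assoc, ← map_mul]
    · simp [actL, h, ev, mul_assoc]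
  · by_cases h : a = 1 <;> simp [actL, h, ev]

lemma ev_actR (a : G₂) (w : List (G₁ ⊕ G₂)) : ev (actR a w) = inr a * ev w := by
  rcases w with _ | ⟨x | y, w⟩
  · by_cases h : a = 1 <;> simp [actR, h, ev]
  · by_cases h : a = 1 <;> simp [actR, h, ev]
  · by_cases h : a * y = 1
    · simp [actR, h, ev, ← mul_assoc, ← map_mul]
    · simp [actR, h, ev, mul_assoc]

lemma ev_nf (g : Monoid.Coprod G₁ G₂) : ev (nf g) = g := by
  induction g using Monoid.Coprod.induction_on' with
  | one => rw [nf_one]; rfl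
  | inl_mul a g ih => rw [nf_inl, ev_actL, ih]
  | inr_mul a g ih => rw [nf_inr, ev_actR, ih]

end words

section wl
variable {G : Type*} [Group G]

/-- `S` generates `G` as a monoid. -/
def Gen (S : Set G) : Prop := ∀ g : G, ∃ l : List G, (∀ x ∈ l, x ∈ S) ∧ l.prod = g

lemma gen_of_closure (S : Set G) (h : Subgroup.closure S = ⊤) (hs : ∀ s ∈ S, s⁻¹ ∈ S) :
    Gen S := by
  intro g
  have hg : g ∈ (Subgroup.closure S).toSubmonoid := by rw [h]; trivial
  rw [Subgroup.closure_toSubmonoid] at hg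
  obtain ⟨l, hl, hp⟩ := Submonoid.exists_list_of_mem_closure hg
  refine ⟨l, fun x hx => ?_, hp⟩
  rcases hl x hx with h | h
  · exact h
  · simpa using hs _ h

lemma wl_le {S : Set G} {l : List G} (hl : ∀ x ∈ l, x ∈ S) : wordLength S l.prod ≤ l.length :=
  Nat.sInf_le ⟨l, hl, rfl, rfl⟩

lemma wl_spec {S : Set G} (hS : Gen S) (g : G) :
    ∃ l : List G, (∀ x ∈ l, x ∈ S) ∧ l.length = wordLength S g ∧ l.prod = g := by
  obtain ⟨l, hl, hp⟩ := hS g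
  exact Nat.sInf_mem (s := {n | ∃ l : List G, (∀ x ∈ l, x ∈ S) ∧ l.length = n ∧ l.prod = g})
    ⟨_, l, hl, rfl, hp⟩

lemma wl_mul {S : Set G} (hS : Gen S) (g h : G) :
    wordLength S (g * h) ≤ wordLength S g + wordLength S h := by
  obtain ⟨l, hl, h1, h2⟩ := wl_spec hS g
  obtain ⟨l', hl', h1', h2'⟩ := wl_spec hS h
  have := wl_le (S := S) (l := l ++ l') (by
    intro x hx; rcases List.mem_append.1 hx with hx | hx
    exacts [hl x hx, hl' x hx])
  simpa [h1, h2, h1', h2'] using this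

lemma wl_one (S : Set G) : wordLength S (1 : G) = 0 := by
  have := wl_le (S := S) (l := []) (by simp)
  simpa using this

lemma wl_gen {S : Set G} {s : G} (h : s ∈ S) : wordLength S s ≤ 1 := by
  have := wl_le (S := S) (l := [s]) (by simpa using h)
  simpa using this

lemma ball_finite {S : Set G} (hf : S.Finite) (hS : Gen S) (n : ℕ) :
    {g : G | wordLength S g ≤ n}.Finite := by
  have : Finite S := hf
  refine ((List.finite_length_le S n).image (fun l => (l.map Subtype.val).prod)).subset ?_
  intro g hg
  obtain ⟨l, hl, h1, h2⟩ := wl_spec hS g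
  refine ⟨l.attachWith (· ∈ S) hl, ?_, ?_⟩
  · simp only [Set.mem_ofPred_eq, List.length_attachWith] at hg ⊢; omega
  · simp [h2]

noncomputable def ball (S : Set G) (n : ℕ) : ℕ := Nat.card {g : G // wordLength S g ≤ n}

lemma ball_pos {S : Set G} (hf : S.Finite) (hS : Gen S) (n : ℕ) : 0 < ball S n := by
  have : Finite {g : G // wordLength S g ≤ n} := ball_finite hf hS n
  have : Nonempty {g : G // wordLength S g ≤ n} := ⟨⟨1, by simp [wl_one]⟩⟩
  exact Nat.card_pos

lemma ball_mul {S : Set G} (hf : S.Finite) (hS : Gen S) (m n : ℕ) :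
    ball S (m + n) ≤ ball S m * ball S n := by
  have : Finite {g : G // wordLength S g ≤ n} := ball_finite hf hS n
  have : Finite {g : G // wordLength S g ≤ m} := ball_finite hf hS m
  unfold ball
  rw [← Nat.card_prod]
  have key : ∀ g : {g : G // wordLength S g ≤ m + n},
      ∃ p : {g : G // wordLength S g ≤ m} × {g : G // wordLength S g ≤ n},
        p.1.1 * p.2.1 = g.1 := by
    rintro ⟨g, hg⟩
    obtain ⟨l, hl, h1, h2⟩ := wl_spec hS g
    refine ⟨⟨⟨(l.take m).prod, ?_⟩, ⟨(l.drop m).prod, ?_⟩⟩, ?_⟩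
    · refine (wl_le fun x hx => hl x (List.mem_of_mem_take hx)).trans ?_
      simp
    · refine (wl_le fun x hx => hl x (List.mem_of_mem_drop hx)).trans ?_
      simp; omega
    · simp [List.prod_take_mul_prod_drop, h2]
  choose f hfm using key
  refine Nat.card_le_card_of_injective f ?_
  intro g g' h
  apply Subtype.ext
  rw [← hfm g, ← hfm g', h]

end wl

section lengths
variable {G₁ G₂ : Type*} [Group G₁] [Group G₂]
set_option linter.unusedSectionVars false

/-- Weighted length of a word. -/
noncomputable def wt (S₁ : Finset G₁) (S₂ : Finset G₂) : List (G₁ ⊕ G₂) → ℕ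
  | [] => 0
  | Sum.inl a :: w => wordLength (S₁ : Set G₁) a + wt S₁ S₂ w
  | Sum.inr b :: w => wordLength (S₂ : Set G₂) b + wt S₁ S₂ w

variable {S₁ : Finset G₁} {S₂ : Finset G₂}

lemma gen_map (h₁ : Gen (S₁ : Set G₁)) (h₂ : Gen (S₂ : Set G₂)) : Gen (unionGens S₁ S₂) := by
  intro g
  induction g using Monoid.Coprod.induction_on' with
  | one => exact ⟨[], by simp, rfl⟩
  | inl_mul a g ih =>
    obtain ⟨l, hl, hp⟩ := ih
    obtain ⟨l', hl', hp'⟩ := h₁ a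
    refine ⟨l'.map inl ++ l, ?_, ?_⟩
    · intro x hx
      rcases List.mem_append.1 hx with hx | hx
      · obtain ⟨y, hy, rfl⟩ := List.mem_map.1 hx
        exact Or.inl ⟨y, hl' y hy, rfl⟩
      · exact hl x hx
    · rw [List.prod_append, List.prod_hom, hp, hp']
  | inr_mul a g ih =>
    obtain ⟨l, hl, hp⟩ := ih
    obtain ⟨l', hl', hp'⟩ := h₂ a
    refine ⟨l'.map inr ++ l, ?_, ?_⟩
    · intro x hx
      rcases List.mem_append.1 hx with hx | hx
      · obtain ⟨y, hy, rfl⟩ := List.mem_map.1 hx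
        exact Or.inr ⟨y, hl' y hy, rfl⟩
      · exact hl x hx
    · rw [List.prod_append, List.prod_hom, hp, hp']

lemma wl_inl (h₁ : Gen (S₁ : Set G₁)) (a : G₁) :
    wordLength (unionGens S₁ S₂) (inl a) ≤ wordLength (S₁ : Set G₁) a := by
  obtain ⟨l, hl, h1, h2⟩ := wl_spec h₁ a
  have := wl_le (S := unionGens S₁ S₂) (l := l.map inl) (by
    intro x hx
    obtain ⟨y, hy, rfl⟩ := List.mem_map.1 hx
    exact Or.inl ⟨y, hl y hy, rfl⟩)
  rwa [List.prod_hom, h2, List.length_map, h1] at this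

lemma wl_inr (h₂ : Gen (S₂ : Set G₂)) (a : G₂) :
    wordLength (unionGens S₁ S₂) (inr a) ≤ wordLength (S₂ : Set G₂) a := by
  obtain ⟨l, hl, h1, h2⟩ := wl_spec h₂ a
  have := wl_le (S := unionGens S₁ S₂) (l := l.map inr) (by
    intro x hx
    obtain ⟨y, hy, rfl⟩ := List.mem_map.1 hx
    exact Or.inr ⟨y, hl y hy, rfl⟩)
  rwa [List.prod_hom, h2, List.length_map, h1] at this

lemma wl_ev_le (h₁ : Gen (S₁ : Set G₁)) (h₂ : Gen (S₂ : Set G₂)) :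
    ∀ w : List (G₁ ⊕ G₂), wordLength (unionGens S₁ S₂) (ev w) ≤ wt S₁ S₂ w
  | [] => by simp [ev, wl_one]
  | Sum.inl a :: w => (wl_mul (gen_map h₁ h₂) _ _).trans
      (add_le_add (wl_inl h₁ a) (wl_ev_le h₁ h₂ w))
  | Sum.inr a :: w => (wl_mul (gen_map h₁ h₂) _ _).trans
      (add_le_add (wl_inr h₂ a) (wl_ev_le h₁ h₂ w))

lemma wt_actL (h₁ : Gen (S₁ : Set G₁)) (s : G₁) (hs : s ∈ S₁) (w : List (G₁ ⊕ G₂)) :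
    wt S₁ S₂ (actL s w) ≤ 1 + wt S₁ S₂ w := by
  have h0 : wordLength (S₁ : Set G₁) s ≤ 1 := wl_gen (by simpa using hs)
  rcases w with _ | ⟨x | y, w⟩
  · by_cases h : s = 1 <;> simp [actL, h, wt]
    omega
  · have := wl_mul h₁ s x
    by_cases h : s * x = 1 <;> simp [actL, h, wt] <;> omega
  · by_cases h : s = 1 <;> simp [actL, h, wt]
    omega

lemma wt_actR (h₂ : Gen (S₂ : Set G₂)) (s : G₂) (hs : s ∈ S₂) (w : List (G₁ ⊕ G₂)) :
    wt S₁ S₂ (actR s w) ≤ 1 + wt S₁ S₂ w := by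
  have h0 : wordLength (S₂ : Set G₂) s ≤ 1 := wl_gen (by simpa using hs)
  rcases w with _ | ⟨x | y, w⟩
  · by_cases h : s = 1 <;> simp [actR, h, wt]
    omega
  · by_cases h : s = 1 <;> simp [actR, h, wt]
    omega
  · have := wl_mul h₂ s y
    by_cases h : s * y = 1 <;> simp [actR, h, wt] <;> omega

lemma wt_nf_le (h₁ : Gen (S₁ : Set G₁)) (h₂ : Gen (S₂ : Set G₂)) :
    ∀ l : List (Monoid.Coprod G₁ G₂), (∀ x ∈ l, x ∈ unionGens S₁ S₂) →
      wt S₁ S₂ (nf l.prod) ≤ l.length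
  | [], _ => by simp [nf_one, wt]
  | x :: l, h => by
    have ih := wt_nf_le h₁ h₂ l (fun y hy => h y (by simp [hy]))
    rw [List.prod_cons, List.length_cons]
    rcases h x (by simp) with ⟨s, hs, rfl⟩ | ⟨s, hs, rfl⟩
    · rw [nf_inl]
      have := wt_actL (S₂ := S₂) h₁ s (by simpa using hs) (nf l.prod)
      omega
    · rw [nf_inr]
      have := wt_actR (S₁ := S₁) h₂ s (by simpa using hs) (nf l.prod)
      omega

lemma wl_ev (h₁ : Gen (S₁ : Set G₁)) (h₂ : Gen (S₂ : Set G₂)) (w : List (G₁ ⊕ G₂))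
    (hw : Red w) : wordLength (unionGens S₁ S₂) (ev w) = wt S₁ S₂ w := by
  refine le_antisymm (wl_ev_le h₁ h₂ w) ?_
  obtain ⟨l, hl, h1, h2⟩ := wl_spec (gen_map h₁ h₂) (ev w)
  have := wt_nf_le h₁ h₂ l hl
  rwa [h2, nf_ev w hw, h1] at this

variable (G₁ G₂) in
abbrev PP := {a : G₁ // a ≠ 1} × {b : G₂ // b ≠ 1}

def pp (p : PP G₁ G₂) : Monoid.Coprod G₁ G₂ := inl p.1.1 * inr p.2.1

def flat : List (PP G₁ G₂) → List (G₁ ⊕ G₂)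
  | [] => []
  | p :: l => Sum.inl p.1.1 :: Sum.inr p.2.1 :: flat l

lemma flat_red : ∀ l : List (PP G₁ G₂), Red (flat l) ∧ ¬ SR (flat l)
  | [] => ⟨trivial, by simp [flat, SR]⟩
  | p :: l => ⟨⟨p.1.2, by simp [SL], p.2.2, (flat_red l).2, (flat_red l).1⟩, by simp [flat, SR]⟩

lemma flat_inj : ∀ l l' : List (PP G₁ G₂), flat l = flat l' → l = l'
  | [], [], _ => rfl
  | [], p :: l, h => by simp [flat] at h
  | p :: l, [], h => by simp [flat] at h
  | p :: l, q :: l', h => by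
    simp only [flat, List.cons.injEq, Sum.inl.injEq, Sum.inr.injEq] at h
    rw [flat_inj l l' h.2.2, Prod.ext (Subtype.ext h.1) (Subtype.ext h.2.1)]

lemma ev_flat : ∀ l : List (PP G₁ G₂), ev (flat l) = (l.map pp).prod
  | [] => rfl
  | p :: l => by simp [flat, ev, ev_flat l, pp, mul_assoc]

lemma prod_inj (l l' : List (PP G₁ G₂)) (h : (l.map pp).prod = (l'.map pp).prod) : l = l' := by
  apply flat_inj
  rw [← ev_flat, ← ev_flat] at h
  rw [← nf_ev _ (flat_red l).1, h, nf_ev _ (flat_red l').1]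

lemma pp_inj : Function.Injective (pp : PP G₁ G₂ → Monoid.Coprod G₁ G₂) := by
  intro p q h
  have := prod_inj [p] [q] (by simpa using h)
  simpa using this

noncomputable def pl (S₁ : Finset G₁) (S₂ : Finset G₂) (p : PP G₁ G₂) : ℕ :=
  wordLength (S₁ : Set G₁) p.1.1 + wordLength (S₂ : Set G₂) p.2.1

lemma wt_flat : ∀ l : List (PP G₁ G₂), wt S₁ S₂ (flat l) = (l.map (pl S₁ S₂)).sum
  | [] => rfl
  | p :: l => by simp [flat, wt, wt_flat l, pl, add_assoc]

lemma wl_prod (h₁ : Gen (S₁ : Set G₁)) (h₂ : Gen (S₂ : Set G₂)) (l : List (PP G₁ G₂)) :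
    wordLength (unionGens S₁ S₂) (l.map pp).prod = (l.map (pl S₁ S₂)).sum := by
  rw [← ev_flat, wl_ev h₁ h₂ _ (flat_red l).1, wt_flat]

lemma wl_pp (h₁ : Gen (S₁ : Set G₁)) (h₂ : Gen (S₂ : Set G₂)) (p : PP G₁ G₂) :
    wordLength (unionGens S₁ S₂) (pp p) = pl S₁ S₂ p := by
  simpa using wl_prod h₁ h₂ [p]

lemma decomp_aux : ∀ w : List (G₁ ⊕ G₂), Red w → ¬ SR w → ∃ (l : List (PP G₁ G₂)) (a : G₁),
    ev w = (l.map pp).prod * inl a ∧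
      wt S₁ S₂ w = (l.map (pl S₁ S₂)).sum + wordLength (S₁ : Set G₁) a
  | [], _, _ => ⟨[], 1, by simp [ev], by simp [wt, wl_one]⟩
  | [Sum.inl a], _, _ => ⟨[], a, by simp [ev], by simp [wt]⟩
  | Sum.inr b :: w, _, h => absurd trivial h
  | Sum.inl a :: Sum.inl b :: w, h, _ => absurd trivial h.2.1
  | Sum.inl a :: Sum.inr b :: w, h, _ => by
    obtain ⟨l, c, h1, h2⟩ := decomp_aux w h.2.2.2.2 h.2.2.2.1
    refine ⟨(⟨a, h.1⟩, ⟨b, h.2.2.1⟩) :: l, c, ?_, ?_⟩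
    · simp [ev, h1, pp, mul_assoc]
    · simp [wt, h2, pl, add_assoc]

lemma decomp (h₁ : Gen (S₁ : Set G₁)) (h₂ : Gen (S₂ : Set G₂)) (g : Monoid.Coprod G₁ G₂) :
    ∃ t : G₂ × List (PP G₁ G₂) × G₁, g = inr t.1 * ((t.2.1.map pp).prod * inl t.2.2) ∧
      wordLength (unionGens S₁ S₂) g = wordLength (S₂ : Set G₂) t.1 +
        ((t.2.1.map (pl S₁ S₂)).sum + wordLength (S₁ : Set G₁) t.2.2) := by
  have hr := nf_red g
  have he := ev_nf g
  have hw := wl_ev h₁ h₂ _ hr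
  rw [he] at hw
  rw [hw]
  generalize nf g = w at hr he
  subst he
  rcases w with _ | ⟨x | y, w⟩
  · obtain ⟨l, a, h1, h2⟩ := decomp_aux (S₁ := S₁) (S₂ := S₂) _ hr (by simp [SR])
    exact ⟨(1, l, a), by simp [h1], by simp [h2, wl_one]⟩
  · obtain ⟨l, a, h1, h2⟩ := decomp_aux (S₁ := S₁) (S₂ := S₂) _ hr (by simp [SR])
    exact ⟨(1, l, a), by simp [h1], by simp [h2, wl_one]⟩
  · obtain ⟨l, a, h1, h2⟩ := decomp_aux (S₁ := S₁) (S₂ := S₂) _ hr.2.2 hr.2.1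
    exact ⟨(y, l, a), by simp [ev, h1], by simp [wt, h2]⟩

end lengths

section series
open scoped ENNReal

lemma tsum_pi_prod {P : Type*} (f : P → ℝ≥0∞) (n : ℕ) :
    ∑' x : Fin n → P, ((List.ofFn x).map f).prod = (∑' p, f p) ^ n := by
  induction n with
  | zero => simp [tsum_fintype]
  | succ n ih =>
    rw [← (Fin.consEquiv (fun _ : Fin (n + 1) => P)).tsum_eq, ENNReal.tsum_prod', pow_succ',
      ← ih, ← ENNReal.tsum_mul_right]
    refine tsum_congr fun p => ?_
    rw [← ENNReal.tsum_mul_left]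
    refine tsum_congr fun x => ?_
    simp [Fin.consEquiv]

lemma tsum_list_prod {P : Type*} (f : P → ℝ≥0∞) :
    ∑' l : List P, (l.map f).prod = (1 - ∑' p, f p)⁻¹ := by
  rw [← (List.equivSigmaTuple (α := P)).symm.tsum_eq, ENNReal.tsum_sigma', ← ENNReal.tsum_geometric]
  exact tsum_congr fun n => tsum_pi_prod f n

lemma pow_sum_map {P : Type*} (z : ℝ≥0∞) (f : P → ℕ) (l : List P) :
    z ^ (l.map f).sum = (l.map fun p => z ^ f p).prod := by
  induction l with
  | nil => simp
  | cons a l ih => simp [pow_add, ih]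

lemma tsum_prod_mul {X Y : Type*} (f : X → ℝ≥0∞) (g : Y → ℝ≥0∞) :
    ∑' x : X × Y, f x.1 * g x.2 = (∑' x, f x) * ∑' y, g y := by
  rw [ENNReal.tsum_prod', ← ENNReal.tsum_mul_right]
  exact tsum_congr fun x => ENNReal.tsum_mul_left (f := g) (a := f x)

variable {G : Type*} [Group G]

lemma ball_series {S : Set G} (hf : S.Finite) (hS : Gen S) (z : ℝ≥0∞) :
    ∑' n : ℕ, (ball S n : ℝ≥0∞) * z ^ n
      = ∑' g : G, ∑' n : ℕ, if wordLength S g ≤ n then z ^ n else 0 := by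
  rw [ENNReal.tsum_comm]
  refine tsum_congr fun n => ?_
  have : Finite {g : G // wordLength S g ≤ n} := ball_finite hf hS n
  have h1 := tsum_subtype {g : G | wordLength S g ≤ n} (fun _ => z ^ n)
  have h2 : ∀ g : G, (if wordLength S g ≤ n then z ^ n else 0)
      = Set.indicator {g : G | wordLength S g ≤ n} (fun _ => z ^ n) g := by
    intro g; simp [Set.indicator_apply]
  simp_rw [h2]
  rw [← h1]
  change _ = ∑' _ : {g : G // wordLength S g ≤ n}, z ^ n
  rw [ENNReal.tsum_const, ENat.card_eq_coe_natCard]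
  rfl

lemma inner_series (z : ℝ≥0∞) (m : ℕ) :
    (∑' n : ℕ, if m ≤ n then z ^ n else 0) = z ^ m * (1 - z)⁻¹ := by
  rw [← ENNReal.tsum_geometric, ← ENNReal.tsum_mul_left]
  rw [← (add_right_injective m).tsum_eq (f := fun n => if m ≤ n then z ^ n else 0)]
  · refine tsum_congr fun n => ?_
    simp [pow_add]
  · intro n hn
    simp only [Function.mem_support, ne_eq, ite_eq_right_iff, Classical.not_imp] at hn
    exact ⟨n - m, by simp; omega⟩

noncomputable def zz (w : ℝ) : ℝ≥0∞ := ENNReal.ofReal (Real.exp (-w))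

lemma zz_pow (w : ℝ) (n : ℕ) : zz w ^ n = ENNReal.ofReal (Real.exp (-(w * n))) := by
  rw [zz, ← ENNReal.ofReal_pow (Real.exp_pos _).le, ← Real.exp_nat_mul]
  congr 2; ring

lemma subadd {S : Set G} (hf : S.Finite) (hS : Gen S) :
    Subadditive (fun n : ℕ => Real.log (ball S n)) := by
  intro m n
  have hm := ball_pos hf hS m
  have hn := ball_pos hf hS n
  rw [← Real.log_mul (by positivity) (by positivity)]
  apply Real.log_le_log
  · exact_mod_cast ball_pos hf hS _
  · exact_mod_cast ball_mul hf hS m n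

lemma bdd {S : Set G} : BddBelow (Set.range fun n : ℕ => Real.log (ball S n) / n) := by
  refine ⟨0, ?_⟩
  rintro _ ⟨n, rfl⟩
  have : 0 ≤ Real.log (ball S n) := Real.log_natCast_nonneg _
  positivity

lemma growth {S : Set G} (hf : S.Finite) (hS : Gen S) (v : ℝ)
    (hv : v = liminf (fun n : ℕ => Real.log (ball S n) / n) atTop) :
    Tendsto (fun n : ℕ => Real.log (ball S n) / n) atTop (nhds v) ∧ 0 ≤ v ∧
      ∀ n : ℕ, Real.exp (v * n) ≤ ball S n := by
  have ht := (subadd hf hS).tendsto_lim bdd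
  have hv' : v = (subadd hf hS).lim := hv.trans ht.liminf_eq
  rw [← hv'] at ht
  refine ⟨ht, ?_, fun n => ?_⟩
  · refine ge_of_tendsto' ht fun n => ?_
    have : 0 ≤ Real.log (ball S n) := Real.log_natCast_nonneg _
    positivity
  · have hn := ball_pos hf hS n
    rw [← Real.le_log_iff_exp_le (by exact_mod_cast hn)]
    rcases eq_or_ne n 0 with rfl | h0
    · simpa using Real.log_natCast_nonneg _
    · have := (subadd hf hS).lim_le_div bdd h0
      rw [← hv'] at this
      rwa [le_div_iff₀ (by positivity)] at this

/-- The growth series converges inside the disc. -/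
lemma series_lt_top {S : Set G} (hf : S.Finite) (hS : Gen S) (v w : ℝ)
    (hv : v = liminf (fun n : ℕ => Real.log (ball S n) / n) atTop) (hw : v < w) :
    ∑' g : G, zz w ^ wordLength S g < ∞ := by
  obtain ⟨ht, h0, -⟩ := growth hf hS v hv
  have hle : ∑' g : G, zz w ^ wordLength S g ≤ ∑' n : ℕ, (ball S n : ℝ≥0∞) * zz w ^ n := by
    rw [ball_series hf hS]
    refine ENNReal.tsum_le_tsum fun g => ?_
    refine le_trans ?_ (ENNReal.le_tsum (wordLength S g))
    simp
  refine hle.trans_lt ?_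
  obtain ⟨u, hu1, hu2⟩ := exists_between hw
  have hs : Summable (fun n : ℕ => (ball S n : ℝ) * Real.exp (-(w * n))) := by
    refine Summable.of_norm_bounded_eventually_nat (g := fun n : ℕ => Real.exp (-(w - u)) ^ n)
      (summable_geometric_of_lt_one (Real.exp_pos _).le (by rw [Real.exp_lt_one_iff]; linarith)) ?_
    filter_upwards [ht.eventually_lt_const hu1, eventually_gt_atTop 0] with n hn hn0
    have hb := ball_pos hf hS n
    rw [div_lt_iff₀ (by positivity), Real.log_lt_iff_lt_exp (by exact_mod_cast hb)] at hn
    rw [Real.norm_of_nonneg (by positivity), ← Real.exp_nat_mul]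
    calc (ball S n : ℝ) * Real.exp (-(w * n)) ≤ Real.exp (u * n) * Real.exp (-(w * n)) := by gcongr
      _ = _ := by rw [← Real.exp_add]; congr 1; ring
  have heq : ∀ n : ℕ, (ball S n : ℝ≥0∞) * zz w ^ n
      = ENNReal.ofReal ((ball S n : ℝ) * Real.exp (-(w * n))) := by
    intro n
    rw [zz_pow, ENNReal.ofReal_mul (by positivity), ENNReal.ofReal_natCast]
  simp_rw [heq]
  exact hs.tsum_ofReal_lt_top

/-- The growth series diverges at the critical exponent. -/
lemma series_eq_top {S : Set G} (hf : S.Finite) (hS : Gen S) (v : ℝ)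
    (hv : v = liminf (fun n : ℕ => Real.log (ball S n) / n) atTop) (h0 : v ≠ 0) :
    ∑' g : G, zz v ^ wordLength S g = ∞ := by
  obtain ⟨ht, hn, hb⟩ := growth hf hS v hv
  have hz : zz v < 1 := by
    rw [zz, ENNReal.ofReal_lt_one, Real.exp_lt_one_iff]
    have := lt_of_le_of_ne hn (Ne.symm h0)
    linarith
  have h1 := ball_series hf hS (zz v)
  simp_rw [inner_series] at h1
  rw [ENNReal.tsum_mul_right] at h1
  have h2 : ∑' n : ℕ, (ball S n : ℝ≥0∞) * zz v ^ n = ∞ := by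
    rw [eq_top_iff, ← ENNReal.tsum_const_eq_top_of_ne_zero (α := ℕ) (c := 1) one_ne_zero]
    refine ENNReal.tsum_le_tsum fun n => ?_
    rw [zz_pow, ← ENNReal.ofReal_natCast, ← ENNReal.ofReal_mul (by positivity)]
    rw [ENNReal.one_le_ofReal, Real.exp_neg, ← div_eq_mul_inv, one_le_div (Real.exp_pos _)]
    exact hb n
  by_contra hne
  rw [h2] at h1
  refine ENNReal.mul_ne_top hne ?_ h1.symm
  rw [ne_eq, ENNReal.inv_eq_top, tsub_eq_zero_iff_le, not_le]
  exact hz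

end series

section main
open scoped ENNReal
variable {G₁ G₂ : Type*} [Group G₁] [Group G₂] {S₁ : Finset G₁} {S₂ : Finset G₂}

lemma union_finite : (unionGens S₁ S₂).Finite :=
  (S₁.finite_toSet.image _).union (S₂.finite_toSet.image _)

lemma tsum_le_one_add {G : Type*} [Group G] (f : G → ℝ≥0∞) :
    ∑' g, f g ≤ f 1 + ∑' g : {g : G // g ≠ 1}, f g := by
  classical
  have h1 := tsum_subtype {g : G | g ≠ 1} f
  rw [ENNReal.tsum_eq_add_tsum_ite 1]
  gcongr
  refine le_of_eq (Eq.trans (tsum_congr fun g => ?_) h1.symm)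
  by_cases h : g = 1 <;> simp [h]

lemma pair_sum_le (h₁ : Gen (S₁ : Set G₁)) (h₂ : Gen (S₂ : Set G₂)) (z : ℝ≥0∞) :
    (1 - ∑' p : PP G₁ G₂, z ^ pl S₁ S₂ p)⁻¹
      ≤ ∑' g : Monoid.Coprod G₁ G₂, z ^ wordLength (unionGens S₁ S₂) g := by
  rw [← tsum_list_prod]
  refine le_trans (le_of_eq (tsum_congr fun l => ?_))
    (ENNReal.tsum_comp_le_tsum_of_injective (f := fun l : List (PP G₁ G₂) => (l.map pp).prod)
      (fun l l' h => prod_inj l l' h) _)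
  rw [wl_prod h₁ h₂, pow_sum_map]

lemma series_le (h₁ : Gen (S₁ : Set G₁)) (h₂ : Gen (S₂ : Set G₂)) (z : ℝ≥0∞) :
    ∑' g : Monoid.Coprod G₁ G₂, z ^ wordLength (unionGens S₁ S₂) g
      ≤ (∑' b : G₂, z ^ wordLength (S₂ : Set G₂) b) *
        ((1 - ∑' p : PP G₁ G₂, z ^ pl S₁ S₂ p)⁻¹ *
          ∑' a : G₁, z ^ wordLength (S₁ : Set G₁) a) := by
  choose t ht1 ht2 using decomp (S₁ := S₁) (S₂ := S₂) h₁ h₂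
  have hinj : Function.Injective t := by
    intro g g' h
    rw [ht1 g, ht1 g', h]
  rw [← tsum_list_prod, ← tsum_prod_mul, ← tsum_prod_mul (f := fun b : G₂ => z ^ wordLength (S₂ : Set G₂) b)]
  refine le_trans (le_of_eq (tsum_congr fun g => ?_))
    (ENNReal.tsum_comp_le_tsum_of_injective hinj _)
  rw [ht2 g, pow_add, pow_add, pow_sum_map]

lemma pair_sum_eq_one [Nontrivial G₁] [Nontrivial G₂]
    (h₁ : Gen (S₁ : Set G₁)) (h₂ : Gen (S₂ : Set G₂)) (v : ℝ)
    (hv : v = liminf (fun n : ℕ => Real.log (ball (unionGens S₁ S₂) n) / n) atTop) :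
    ∑' p : PP G₁ G₂, zz v ^ pl S₁ S₂ p = 1 := by
  have hS := gen_map h₁ h₂
  have hf : (unionGens S₁ S₂).Finite := union_finite
  have hz0 : ∀ n, zz v ^ n ≠ 0 := by
    intro n; rw [zz_pow]; simp [Real.exp_pos]
  have hz1 : ∀ n, zz v ^ n ≠ ∞ := by
    intro n; rw [zz_pow]; simp
  apply le_antisymm
  · have hw : ∀ w, v < w → ∑' p : PP G₁ G₂, zz w ^ pl S₁ S₂ p ≤ 1 := by
      intro w hw
      by_contra hc
      have h3 := (pair_sum_le h₁ h₂ (zz w)).trans_lt (series_lt_top hf hS v w hv hw)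
      rw [tsub_eq_zero_of_le (not_le.1 hc).le] at h3
      simp at h3
    rw [ENNReal.tsum_eq_iSup_sum]
    refine iSup_le fun s => ?_
    have hreal : ∀ w, ∑ p ∈ s, zz w ^ pl S₁ S₂ p
        = ENNReal.ofReal (∑ p ∈ s, Real.exp (-(w * pl S₁ S₂ p))) := by
      intro w
      rw [ENNReal.ofReal_sum_of_nonneg (fun _ _ => (Real.exp_pos _).le)]
      exact Finset.sum_congr rfl fun p _ => zz_pow _ _
    rw [hreal, ENNReal.ofReal_le_one]
    have hcont : Continuous fun w : ℝ => ∑ p ∈ s, Real.exp (-(w * pl S₁ S₂ p)) := by fun_prop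
    refine le_of_tendsto (hcont.continuousWithinAt (s := Set.Ioi v) (x := v)) ?_
    filter_upwards [self_mem_nhdsWithin] with w hw'
    have := (ENNReal.sum_le_tsum s).trans (hw w hw')
    rwa [hreal, ENNReal.ofReal_le_one] at this
  · by_contra hc
    have hc := not_le.1 hc
    obtain ⟨a, ha⟩ := exists_ne (1 : G₁)
    obtain ⟨b, hb⟩ := exists_ne (1 : G₂)
    rcases eq_or_ne v 0 with rfl | hv0
    · have := (ENNReal.le_tsum (f := fun p : PP G₁ G₂ => zz 0 ^ pl S₁ S₂ p)
        (⟨a, ha⟩, ⟨b, hb⟩)).trans_lt hc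
      simp [zz] at this
    · have htop := series_eq_top hf hS v hv hv0
      refine (ne_of_lt ?_) htop
      refine (series_le h₁ h₂ (zz v)).trans_lt ?_
      have hprod : (∑' a : {a : G₁ // a ≠ 1}, zz v ^ wordLength (S₁ : Set G₁) a.1) *
          (∑' b : {b : G₂ // b ≠ 1}, zz v ^ wordLength (S₂ : Set G₂) b.1) < 1 := by
        refine lt_of_eq_of_lt ?_ hc
        rw [ENNReal.tsum_prod', ← ENNReal.tsum_mul_right]
        refine tsum_congr fun a => ?_
        rw [← ENNReal.tsum_mul_left]
        refine tsum_congr fun b => ?_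
        rw [pl, pow_add]
      have hA : (∑' a : {a : G₁ // a ≠ 1}, zz v ^ wordLength (S₁ : Set G₁) a.1) ≠ 0 := by
        intro h
        exact hz0 _ (ENNReal.tsum_eq_zero.1 h ⟨a, ha⟩)
      have hB : (∑' b : {b : G₂ // b ≠ 1}, zz v ^ wordLength (S₂ : Set G₂) b.1) ≠ 0 := by
        intro h
        exact hz0 _ (ENNReal.tsum_eq_zero.1 h ⟨b, hb⟩)
      have hA' : (∑' a : {a : G₁ // a ≠ 1}, zz v ^ wordLength (S₁ : Set G₁) a.1) ≠ ∞ := by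
        intro h; rw [h, ENNReal.top_mul hB] at hprod; simp at hprod
      have hB' : (∑' b : {b : G₂ // b ≠ 1}, zz v ^ wordLength (S₂ : Set G₂) b.1) ≠ ∞ := by
        intro h; rw [h, ENNReal.mul_top hA] at hprod; simp at hprod
      refine ENNReal.mul_lt_top ?_ (ENNReal.mul_lt_top ?_ ?_)
      · exact (tsum_le_one_add _).trans_lt (ENNReal.add_lt_top.2 ⟨(hz1 _).lt_top, hB'.lt_top⟩)
      · rw [ENNReal.inv_lt_top, tsub_pos_iff_lt]; exact hc
      · exact (tsum_le_one_add _).trans_lt (ENNReal.add_lt_top.2 ⟨(hz1 _).lt_top, hA'.lt_top⟩)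

end main

section conclusion
open scoped ENNReal
variable {G₁ G₂ : Type*} [Group G₁] [Group G₂] {S₁ : Finset G₁} {S₂ : Finset G₂}

lemma real_sum_eq_one [Nontrivial G₁] [Nontrivial G₂]
    (h₁ : Gen (S₁ : Set G₁)) (h₂ : Gen (S₂ : Set G₂)) (v : ℝ)
    (hv : v = liminf (fun n : ℕ => Real.log (ball (unionGens S₁ S₂) n) / n) atTop) :
    ∑' p : PP G₁ G₂, Real.exp (-(v * pl S₁ S₂ p)) = 1 := by
  have h := congrArg ENNReal.toReal (pair_sum_eq_one h₁ h₂ v hv)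
  simp_rw [zz_pow] at h
  rw [ENNReal.tsum_toReal_eq (fun _ => ENNReal.ofReal_ne_top)] at h
  simpa [ENNReal.toReal_ofReal (Real.exp_pos _).le] using h

lemma conv_main (v : ℝ) (μ : Monoid.Coprod G₁ G₂ → ℝ)
    (hμ₁ : ∀ p : PP G₁ G₂, μ (pp p) = Real.exp (-(v * pl S₁ S₂ p)))
    (hμ₂ : ∀ g, μ g ≠ 0 → ∃ p : PP G₁ G₂, g = pp p) (n : ℕ) :
    (∀ l : List (PP G₁ G₂), l.length = n →
      convPow μ n (l.map pp).prod = Real.exp (-(v * (l.map (pl S₁ S₂)).sum))) ∧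
    (∀ g, convPow μ n g ≠ 0 → ∃ l : List (PP G₁ G₂), l.length = n ∧ g = (l.map pp).prod) := by
  induction n with
  | zero =>
    constructor
    · intro l hl
      rw [List.length_eq_zero_iff] at hl
      subst hl
      simp [convPow]
    · intro g hg
      refine ⟨[], rfl, ?_⟩
      by_contra h
      exact hg (by simpa [convPow] using h)
  | succ n ih =>
    constructor
    · intro l hl
      obtain ⟨p, l, rfl⟩ := List.exists_cons_of_length_eq_add_one hl
      have hl' : l.length = n := by simpa using hl
      change ∑' h, μ h * convPow μ n (h⁻¹ * _) = _
      rw [tsum_eq_single (pp p)]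
      · rw [List.map_cons, List.prod_cons, inv_mul_cancel_left, hμ₁, ih.1 l hl', ← Real.exp_add]
        congr 1
        simp only [List.map_cons, List.sum_cons]
        push_cast
        ring
      · intro g hg
        by_contra hne
        obtain ⟨q, rfl⟩ := hμ₂ g (left_ne_zero_of_mul hne)
        obtain ⟨l', -, h'⟩ := ih.2 _ (right_ne_zero_of_mul hne)
        rw [inv_mul_eq_iff_eq_mul] at h'
        have := prod_inj (p :: l) (q :: l') (by simpa using h')
        simp only [List.cons.injEq] at this
        exact hg (by rw [this.1])
    · intro g hg
      change ∑' h, μ h * convPow μ n (h⁻¹ * g) ≠ 0 at hg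
      obtain ⟨x, hx⟩ : ∃ x, μ x * convPow μ n (x⁻¹ * g) ≠ 0 := by
        by_contra! hc
        simp [hc] at hg
      obtain ⟨p, rfl⟩ := hμ₂ x (left_ne_zero_of_mul hx)
      obtain ⟨l, hl, h'⟩ := ih.2 _ (right_ne_zero_of_mul hx)
      exact ⟨p :: l, by simp [hl], by rw [List.map_cons, List.prod_cons, ← h', mul_inv_cancel_left]⟩

end conclusion
end FP

/-- On a free product `Γ = Γ₁ ∗ Γ₂` of nontrivial groups with the union word metric and growth
rate `v`, the measure `μ(g₁ g₂) = e^{-v |g₁ g₂|}` (for `g₁ ∈ Γ₁∖{e}`, `g₂ ∈ Γ₂∖{e}`, and `0`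
elsewhere) is a probability measure, its convolution powers satisfy
`μ^{*n}(g₁¹g₂¹⋯g₁ⁿg₂ⁿ) = e^{-v ∑ᵢ|g₁ᵢg₂ᵢ|}`, consequently `-log μ^{*n}(g) = v|g|` on the
support of `μ^{*n}`, and `h(μ) = ℓ(μ) v`. -/
theorem stmt_16 {G₁ G₂ : Type*} [Group G₁] [Group G₂] [Nontrivial G₁] [Nontrivial G₂]
    [Countable G₁] [Countable G₂]
    (S₁ : Finset G₁) (S₂ : Finset G₂)
    (hgen₁ : Subgroup.closure (S₁ : Set G₁) = ⊤) (hsym₁ : ∀ s ∈ S₁, s⁻¹ ∈ S₁)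
    (hgen₂ : Subgroup.closure (S₂ : Set G₂) = ⊤) (hsym₂ : ∀ s ∈ S₂, s⁻¹ ∈ S₂)
    (v : ℝ)
    (hv : v = liminf (fun n : ℕ =>
      Real.log (Nat.card {g : Monoid.Coprod G₁ G₂ // wordLength (unionGens S₁ S₂) g ≤ n}) / n)
      atTop)
    (μ : Monoid.Coprod G₁ G₂ → ℝ)
    (hμ₁ : ∀ (a : G₁) (b : G₂), a ≠ 1 → b ≠ 1 →
      μ (Monoid.Coprod.inl a * Monoid.Coprod.inr b)
        = Real.exp (-(v * (wordLength (unionGens S₁ S₂)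
            (Monoid.Coprod.inl a * Monoid.Coprod.inr b) : ℝ))))
    (hμ₂ : ∀ g : Monoid.Coprod G₁ G₂,
      (¬ ∃ (a : G₁) (b : G₂), a ≠ 1 ∧ b ≠ 1 ∧ g = Monoid.Coprod.inl a * Monoid.Coprod.inr b) →
      μ g = 0)
    (h ℓ : ℝ)
    (hh : Tendsto (fun n : ℕ => entropy (convPow μ n) / n) atTop (nhds h))
    (hl : Tendsto (fun n : ℕ =>
      (∑' g, convPow μ n g * (wordLength (unionGens S₁ S₂) g : ℝ)) / n) atTop (nhds ℓ)) :
    ((∀ g, 0 ≤ μ g) ∧ ∑' g, μ g = 1) ∧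
    (∀ (n : ℕ) (a : Fin n → G₁) (b : Fin n → G₂), (∀ i, a i ≠ 1) → (∀ i, b i ≠ 1) →
      convPow μ n
          ((List.ofFn fun i => Monoid.Coprod.inl (a i) * Monoid.Coprod.inr (b i)).prod)
        = Real.exp (-(v * ∑ i : Fin n, (wordLength (unionGens S₁ S₂)
            (Monoid.Coprod.inl (a i) * Monoid.Coprod.inr (b i)) : ℝ)))) ∧
    (∀ (n : ℕ) (g : Monoid.Coprod G₁ G₂), convPow μ n g ≠ 0 →
      -Real.log (convPow μ n g) = v * (wordLength (unionGens S₁ S₂) g : ℝ)) ∧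
    h = ℓ * v := by
  have h₁ : FP.Gen (S₁ : Set G₁) := FP.gen_of_closure _ hgen₁ (by simpa using hsym₁)
  have h₂ : FP.Gen (S₂ : Set G₂) := FP.gen_of_closure _ hgen₂ (by simpa using hsym₂)
  have hp₁ : ∀ p : FP.PP G₁ G₂, μ (FP.pp p) = Real.exp (-(v * FP.pl S₁ S₂ p)) := by
    intro p
    rw [← FP.wl_pp h₁ h₂ p]
    exact hμ₁ p.1.1 p.2.1 p.1.2 p.2.2
  have hp₂ : ∀ g, μ g ≠ 0 → ∃ p : FP.PP G₁ G₂, g = FP.pp p := by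
    intro g hg
    by_contra hc
    refine hg (hμ₂ g ?_)
    rintro ⟨a, b, ha, hb, rfl⟩
    exact hc ⟨(⟨a, ha⟩, ⟨b, hb⟩), rfl⟩
  have hconv := FP.conv_main (S₁ := S₁) (S₂ := S₂) v μ hp₁ hp₂
  have hlog : ∀ (n : ℕ) (g : Monoid.Coprod G₁ G₂), convPow μ n g ≠ 0 →
      -Real.log (convPow μ n g) = v * (wordLength (unionGens S₁ S₂) g : ℝ) := by
    intro n g hg
    obtain ⟨l, hl, rfl⟩ := (hconv n).2 g hg
    rw [(hconv n).1 l hl, Real.log_exp, neg_neg, FP.wl_prod h₁ h₂]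
  refine ⟨⟨?_, ?_⟩, ?_, hlog, ?_⟩
  · intro g
    by_cases hg : μ g = 0
    · exact hg.ge
    · obtain ⟨p, rfl⟩ := hp₂ g hg
      rw [hp₁]
      exact (Real.exp_pos _).le
  · rw [← FP.real_sum_eq_one h₁ h₂ v hv, ← FP.pp_inj.tsum_eq (f := μ)]
    · exact tsum_congr hp₁
    · intro g hg
      obtain ⟨p, rfl⟩ := hp₂ g hg
      exact ⟨p, rfl⟩
  · intro n a b ha hb
    have := (hconv n).1 (List.ofFn fun i => ((⟨a i, ha i⟩, ⟨b i, hb i⟩) : FP.PP G₁ G₂)) (by simp)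
    rw [List.map_ofFn, List.map_ofFn, List.sum_ofFn] at this
    refine Eq.trans this ?_
    push_cast
    congr 3
    refine Finset.sum_congr rfl fun i _ => ?_
    exact congrArg _ (FP.wl_pp h₁ h₂ _).symm
  · refine tendsto_nhds_unique hh ?_
    refine (hl.mul_const v).congr fun n => ?_
    rw [div_mul_eq_mul_div, ← tsum_mul_right]
    congr 1
    refine tsum_congr fun g => ?_
    by_cases hg : convPow μ n g = 0
    · simp [hg]
    · rw [hlog n g hg]; ring
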